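/- Let C = (C, ⊗, I) be a monoidal category possessing finite coproducts which are preserved by each functor A ⊗ (−). Then C has a zero object and finite biproducts if and only if the initial object 0 and the coproduct I + I of the unit with itself admit right duals. -/

import Mathlib

open CategoryTheory CategoryTheory.Limits CategoryTheory.MonoidalCategory

universe v u

/-- `Y` is a right dual of `X`, witnessed by `η : 𝟙_ C ⟶ Y ⊗ X`, when every morphism
`f : A ⟶ B ⊗ X` factors as `(g ▷ X) ∘ (A ◁ η)` (modulo unitor and associator) for a
unique `g : A ⊗ Y ⟶ B`. -/
def IsRightDual {C : Type u} [Category.{v} C] [MonoidalCategory C]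
    (X Y : C) (η : 𝟙_ C ⟶ Y ⊗ X) : Prop :=
  ∀ (A B : C) (f : A ⟶ B ⊗ X), ∃! g : A ⊗ Y ⟶ B,
    f = (ρ_ A).inv ≫ (A ◁ η) ≫ (α_ A Y X).inv ≫ (g ▷ X)

/-- `Y` is a left dual of `X`, witnessed by `η : 𝟙_ C ⟶ X ⊗ Y`, when every morphism
`f : A ⟶ X ⊗ B` factors as `(X ◁ g) ∘ (η ▷ A)` (modulo unitor and associator) for a
unique `g : Y ⊗ A ⟶ B`. -/
def IsLeftDual {C : Type u} [Category.{v} C] [MonoidalCategory C]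
    (X Y : C) (η : 𝟙_ C ⟶ X ⊗ Y) : Prop :=
  ∀ (A B : C) (f : A ⟶ X ⊗ B), ∃! g : Y ⊗ A ⟶ B,
    f = (λ_ A).inv ≫ (η ▷ A) ≫ (α_ X Y A).hom ≫ (X ◁ g)

/-!
In one direction, `- ⊗ Y ⊣ - ⊗ X` shows that a product of objects with right duals has the coproduct
of those duals as its right dual, provided tensoring on the left preserves both; the unit is its own
right dual, and with finite biproducts `⊥_ C` and `𝟙_ C ⨿ 𝟙_ C` are finite products of units.

In the other direction, a right dual of `⊥_ C` yields a morphism `𝟙_ C ⟶ ⊥_ C`, which makes `⊥_ C`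
terminal. A right dual `D` of `𝟙_ C ⨿ 𝟙_ C` comes with functionals `D ⟶ 𝟙_ C` classifying the two
injections, and these reassemble the unit `η` into a diagonal `𝟙_ C ⟶ 𝟙_ C ⨿ 𝟙_ C`. Tensoring a
diagonal of the unit with `A` adds up finite families of morphisms out of `A`, bilinearly, so that
`∑ πᵢ ≫ ιᵢ = 𝟙` exhibits every finite coproduct as a product.
-/

universe w v' u'

section Biproducts

variable {C : Type u} [Category.{v} C]

/-- The initial object as the coproduct of an empty family. -/
noncomputable def initialIsoSigma [HasInitial C] (f : PEmpty.{1} → C) : ⊥_ C ≅ ∐ f :=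
  HasColimit.isoOfNatIso (Functor.uniqueFromEmpty _).symm

/-- The binary coproduct as the coproduct of a family indexed by `WalkingPair`. -/
noncomputable def coprodIsoSigma [HasBinaryCoproducts C] (f : WalkingPair → C) :
    f .left ⨿ f .right ≅ ∐ f :=
  HasColimit.isoOfNatIso (diagramIsoPair (Discrete.functor f)).symm

lemma isZero_of_isInitial_of_isTerminal {Z : C} (hZi : IsInitial Z) (hZt : IsTerminal Z) :
    IsZero Z where
  unique_to Y := ⟨⟨⟨hZi.to Y⟩, fun _ => hZi.hom_ext _ _⟩⟩
  unique_from Y := ⟨⟨⟨hZt.from Y⟩, fun _ => hZt.hom_ext _ _⟩⟩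

variable [HasZeroMorphisms C]

lemma terminalFrom_comp_initialTo {Z : C} (hZi : IsInitial Z) (hZt : IsTerminal Z) (X Y : C) :
    hZt.from X ≫ hZi.to Y = 0 := by
  rw [hZi.hom_ext (hZi.to Y) 0, comp_zero]

theorem hasFiniteBiproducts_iff_exists_isColimit_isLimit {Z : C} (hZi : IsInitial Z)
    (hZt : IsTerminal Z) :
    HasFiniteBiproducts C ↔
      ∀ (ι : Type) (_ : Finite ι) (f : ι → C),
        ∃ (A : C) (inj : ∀ i, f i ⟶ A) (p : ∀ k, A ⟶ f k),
          Nonempty (IsColimit (Cofan.mk A inj)) ∧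
          (∀ k, inj k ≫ p k = 𝟙 (f k)) ∧
          (∀ i k, i ≠ k → inj i ≫ p k = hZt.from (f i) ≫ hZi.to (f k)) ∧
          Nonempty (IsLimit (Fan.mk A p)) := by
  simp only [terminalFrom_comp_initialTo hZi hZt]
  constructor
  · intro _ ι _ f
    exact ⟨⨁ f, biproduct.ι f, biproduct.π f, ⟨biproduct.isColimit f⟩, biproduct.ι_π_self f,
      fun _ _ => biproduct.ι_π_ne f, ⟨biproduct.isLimit f⟩⟩
  · refine fun H => ⟨fun n => ⟨fun f => ?_⟩⟩
    obtain ⟨A, inj, p, ⟨hinj⟩, inj_p_self, inj_p_ne, ⟨hp⟩⟩ := H (Fin n) inferInstance f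
    exact HasBiproduct.mk
      { bicone :=
          { pt := A
            π := p
            ι := inj
            ι_π := fun i k => by
              split_ifs with h
              · subst h
                exact inj_p_self i
              · exact inj_p_ne i k h }
        isBilimit := ⟨hp, hinj⟩ }

variable {J : Type w}

/-- A bicone with colimiting cocone over a family that has a biproduct is itself a biproduct. -/
noncomputable def isBilimitOfIsColimitOfHasBiproduct {f : J → C} [HasBiproduct f] (b : Bicone f)
    (hb : IsColimit b.toCocone) : b.IsBilimit where
  isColimit := hb
  isLimit :=
    let e : ⨁ f ≅ b.pt := (biproduct.isColimit f).coconePointUniqueUpToIso hb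
    have ι_e (j : J) : biproduct.ι f j ≫ e.hom = b.ι j :=
      (biproduct.isColimit f).comp_coconePointUniqueUpToIso_hom hb ⟨j⟩
    (biproduct.isLimit f).ofIsoLimit <| Cone.ext e fun ⟨k⟩ => by
      classical
      refine biproduct.hom_ext' _ _ fun j => ?_
      change biproduct.ι f j ≫ biproduct.π f k = biproduct.ι f j ≫ e.hom ≫ b.π k
      rw [reassoc_of% ι_e j, b.ι_π, biproduct.ι_π]

lemma preservesProductsOfShape_of_preservesCoproductsOfShape {D : Type u'} [Category.{v'} D]
    [HasZeroMorphisms D] [HasBiproductsOfShape J C] [HasBiproductsOfShape J D] (F : C ⥤ D)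
    [F.PreservesZeroMorphisms] [PreservesColimitsOfShape (Discrete J) F] :
    PreservesLimitsOfShape (Discrete J) F where
  preservesLimit {K} := by
    suffices h : ∀ f : J → C, PreservesLimit (Discrete.functor f) F from
      have := h fun j => K.obj ⟨j⟩
      preservesLimit_of_iso_diagram F (Discrete.natIsoFunctor (F := K)).symm
    intro f
    have isColimit_map : IsColimit (F.mapBicone (biproduct.bicone f)).toCocone :=
      isColimitCofanMkObjOfIsColimit F f _ (biproduct.isColimit f)
    exact preservesLimit_of_preserves_limit_cone (biproduct.isLimit f)
      ((isLimitMapConeFanMkEquiv F f _).symm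
        (isBilimitOfIsColimitOfHasBiproduct _ isColimit_map).isLimit)

end Biproducts

section Monoidal

variable {C : Type u} [Category.{v} C] [MonoidalCategory C]

section RightDual

/-- `X` has some right dual in the sense of `IsRightDual`; unlike Mathlib's `HasRightDual` this is a
proposition and records no evaluation morphism. -/
def RightDualizable (X : C) : Prop :=
  ∃ (Y : C) (η : 𝟙_ C ⟶ Y ⊗ X), IsRightDual X Y η

/-- The morphism `A ⟶ B ⊗ X` corresponding to `g : A ⊗ Y ⟶ B` under `η : 𝟙_ C ⟶ Y ⊗ X`. -/
def rightTranspose {X Y : C} (η : 𝟙_ C ⟶ Y ⊗ X) {A B : C} (g : A ⊗ Y ⟶ B) : A ⟶ B ⊗ X :=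
  (ρ_ A).inv ≫ A ◁ η ≫ (α_ A Y X).inv ≫ g ▷ X

lemma isRightDual_iff_bijective_rightTranspose {X Y : C} {η : 𝟙_ C ⟶ Y ⊗ X} :
    IsRightDual X Y η ↔
      ∀ A B : C, Function.Bijective (rightTranspose η : (A ⊗ Y ⟶ B) → (A ⟶ B ⊗ X)) := by
  simp only [IsRightDual, Function.bijective_iff_existsUnique, rightTranspose, eq_comm]

lemma rightTranspose_comp_whiskerLeft {X X' Y Y' : C} {η : 𝟙_ C ⟶ Y ⊗ X} {η' : 𝟙_ C ⟶ Y' ⊗ X'}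
    {p : X ⟶ X'} {i : Y' ⟶ Y} (h : η ≫ Y ◁ p = η' ≫ i ▷ X') {A B : C} (g : A ⊗ Y ⟶ B) :
    rightTranspose η g ≫ B ◁ p = rightTranspose η' (A ◁ i ≫ g) :=
  calc
    rightTranspose η g ≫ B ◁ p
      = (ρ_ A).inv ≫ A ◁ (η ≫ Y ◁ p) ≫ (α_ A Y X').inv ≫ g ▷ X' := by
        simp [rightTranspose, ← whisker_exchange]
    _ = rightTranspose η' (A ◁ i ≫ g) := by
        simp [rightTranspose, h]

lemma isRightDual_unit : IsRightDual (𝟙_ C) (𝟙_ C) (λ_ (𝟙_ C)).inv := by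
  refine isRightDual_iff_bijective_rightTranspose.mpr fun A B => ?_
  have transpose_eq (g : A ⊗ 𝟙_ C ⟶ B) :
      rightTranspose (λ_ (𝟙_ C)).inv g = (ρ_ A).inv ≫ g ≫ (ρ_ B).inv := by
    simp [rightTranspose, unitors_inv_equal]
  refine ⟨fun g g' h => ?_, fun f => ⟨(ρ_ A).hom ≫ f ≫ (ρ_ B).hom, ?_⟩⟩
  · simpa [transpose_eq] using h
  · simp [transpose_eq]

lemma RightDualizable.of_iso {X X' : C} (h : RightDualizable X) (e : X ≅ X') :
    RightDualizable X' := by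
  obtain ⟨Y, η, hη⟩ := h
  refine ⟨Y, η ≫ Y ◁ e.hom, isRightDual_iff_bijective_rightTranspose.mpr fun A B => ?_⟩
  have transpose_eq : (rightTranspose (η ≫ Y ◁ e.hom) : (A ⊗ Y ⟶ B) → (A ⟶ B ⊗ X')) =
      (whiskerLeftIso B e).homToEquiv ∘ rightTranspose η := by
    funext g
    have η_whiskerRight : η ≫ Y ◁ e.hom = (η ≫ Y ◁ e.hom) ≫ 𝟙 Y ▷ X' := by simp
    simpa using (rightTranspose_comp_whiskerLeft η_whiskerRight g).symm
  rw [transpose_eq]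
  exact (Equiv.bijective _).comp (isRightDual_iff_bijective_rightTranspose.mp hη A B)

lemma whiskerRight_comp_leftUnitor_comp {D X : C} (q : D ⟶ 𝟙_ C) (p : X ⟶ 𝟙_ C) :
    q ▷ X ≫ (λ_ X).hom ≫ p = D ◁ p ≫ (ρ_ D).hom ≫ q := by
  rw [← leftUnitor_naturality, ← whisker_exchange_assoc, unitors_equal, rightUnitor_naturality]

lemma IsRightDual.exists_eq_comp_whiskerRight {X D : C} {η : 𝟙_ C ⟶ D ⊗ X}
    (h : IsRightDual X D η) (x : 𝟙_ C ⟶ X) :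
    ∃ q : D ⟶ 𝟙_ C, η ≫ q ▷ X ≫ (λ_ X).hom = x := by
  obtain ⟨g, hg, -⟩ := h (𝟙_ C) (𝟙_ C) (x ≫ (λ_ X).inv)
  refine ⟨(λ_ D).inv ≫ g, ?_⟩
  rw [← cancel_mono (λ_ X).inv, hg, ← unitors_inv_equal]
  simp

theorem rightDualizable_pi {J : Type w} {X : J → C} (hX : ∀ j, RightDualizable (X j))
    [HasProductsOfShape J C] [HasCoproductsOfShape J C]
    [∀ A : C, PreservesLimitsOfShape (Discrete J) (tensorLeft A)]
    [∀ A : C, PreservesColimitsOfShape (Discrete J) (tensorLeft A)] :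
    RightDualizable (∏ᶜ X) := by
  choose Y η hη using hX
  have isLimit (B : C) : IsLimit (Fan.mk (B ⊗ ∏ᶜ X) fun j => B ◁ Pi.π X j) :=
    isLimitFanMkObjOfIsLimit (tensorLeft B) X _ (productIsProduct X)
  have isColimit (A : C) : IsColimit (Cofan.mk (A ⊗ ∐ Y) fun j => A ◁ Sigma.ι Y j) :=
    isColimitCofanMkObjOfIsColimit (tensorLeft A) Y _ (coproductIsCoproduct Y)
  let ηPi : 𝟙_ C ⟶ (∐ Y) ⊗ ∏ᶜ X := Fan.IsLimit.lift (isLimit _) fun j => η j ≫ Sigma.ι Y j ▷ X j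
  have ηPi_π (j : J) : ηPi ≫ (∐ Y) ◁ Pi.π X j = η j ≫ Sigma.ι Y j ▷ X j :=
    Fan.IsLimit.fac (isLimit _) _ j
  have transpose_π {A B : C} (g : A ⊗ ∐ Y ⟶ B) (j : J) :=
    rightTranspose_comp_whiskerLeft (ηPi_π j) g
  have bijective (j : J) := isRightDual_iff_bijective_rightTranspose.mp (hη j)
  refine ⟨∐ Y, ηPi, isRightDual_iff_bijective_rightTranspose.mpr fun A B => ⟨?_, ?_⟩⟩
  · intro g g' h
    refine Cofan.IsColimit.hom_ext (isColimit A) _ _ fun j => (bijective j A B).injective ?_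
    exact (transpose_π g j).symm.trans ((congrArg (· ≫ B ◁ Pi.π X j) h).trans (transpose_π g' j))
  · intro f
    choose g hg using fun j => (bijective j A B).surjective (f ≫ B ◁ Pi.π X j)
    refine ⟨Cofan.IsColimit.desc (isColimit A) g, Fan.IsLimit.hom_ext (isLimit B) _ _ fun j => ?_⟩
    have desc_fac : A ◁ Sigma.ι Y j ≫ Cofan.IsColimit.desc (isColimit A) g = g j :=
      Cofan.IsColimit.fac (isColimit A) g j
    exact (transpose_π _ j).trans (by rw [desc_fac, hg]; rfl)

theorem rightDualizable_sigma_unit (J : Type w) [HasZeroMorphisms C] [HasBiproductsOfShape J C]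
    [∀ A : C, (tensorLeft A).PreservesZeroMorphisms]
    [∀ A : C, PreservesColimitsOfShape (Discrete J) (tensorLeft A)] :
    RightDualizable (∐ fun _ : J => 𝟙_ C) := by
  have (A : C) : PreservesLimitsOfShape (Discrete J) (tensorLeft A) :=
    preservesProductsOfShape_of_preservesCoproductsOfShape (tensorLeft A)
  exact (rightDualizable_pi fun _ : J => ⟨_, _, isRightDual_unit⟩).of_iso
    ((biproduct.isoProduct _).symm ≪≫ biproduct.isoCoproduct _)

end RightDual

section Terminal

variable [∀ A : C, PreservesColimit (Functor.empty.{0} C) (tensorLeft A)]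

lemma nonempty_unit_hom_of_rightDualizable {Z : C} (hZ : IsInitial Z) (h : RightDualizable Z) :
    Nonempty (𝟙_ C ⟶ Z) :=
  let ⟨Y, η, _⟩ := h
  ⟨η ≫ (IsInitial.isInitialObj (tensorLeft Y) Z hZ).to Z⟩

/-- An initial object receiving a morphism from the unit is terminal, when left tensoring preserves
initial objects. -/
noncomputable def isTerminalOfUnitHom {Z : C} (hZ : IsInitial Z) (e : 𝟙_ C ⟶ Z) : IsTerminal Z :=
  let isInitial (A : C) : IsInitial (A ⊗ Z) := IsInitial.isInitialObj (tensorLeft A) Z hZ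
  IsTerminal.ofUniqueHom (fun A => (ρ_ A).inv ≫ A ◁ e ≫ (isInitial A).to Z) fun A m =>
    calc
      m = m ≫ (ρ_ Z).inv ≫ Z ◁ e ≫ (isInitial Z).to Z := by
        rw [hZ.hom_ext ((ρ_ Z).inv ≫ _) (𝟙 Z), Category.comp_id]
      _ = (ρ_ A).inv ≫ A ◁ e ≫ m ▷ Z ≫ (isInitial Z).to Z := by
        rw [whisker_exchange_assoc, rightUnitor_inv_naturality_assoc]
      _ = (ρ_ A).inv ≫ A ◁ e ≫ (isInitial A).to Z := by
        rw [(isInitial A).hom_ext (m ▷ Z ≫ _) ((isInitial A).to Z)]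

end Terminal

section Diagonal

variable {J : Type w} [HasCoproductsOfShape J C]
  [∀ A : C, PreservesColimitsOfShape (Discrete J) (tensorLeft A)]

lemma whiskerLeft_sigma_hom_ext {A W : C} {f : J → C} {g h : A ⊗ ∐ f ⟶ W}
    (w : ∀ j, A ◁ Sigma.ι f j ≫ g = A ◁ Sigma.ι f j ≫ h) : g = h :=
  Cofan.IsColimit.hom_ext
    (isColimitCofanMkObjOfIsColimit (tensorLeft A) f _ (coproductIsCoproduct f)) _ _ w

/-- The morphism out of `A ⊗ ∐ f ≅ ∐ fun j => A ⊗ f j` with prescribed components. -/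
noncomputable def whiskerLeftSigmaDesc {A W : C} {f : J → C} (u : ∀ j, A ⊗ f j ⟶ W) :
    A ⊗ ∐ f ⟶ W :=
  Cofan.IsColimit.desc
    (isColimitCofanMkObjOfIsColimit (tensorLeft A) f _ (coproductIsCoproduct f)) u

lemma whiskerLeft_ι_comp_desc {A W : C} {f : J → C} (u : ∀ j, A ⊗ f j ⟶ W) (j : J) :
    A ◁ Sigma.ι f j ≫ whiskerLeftSigmaDesc u = u j :=
  Cofan.IsColimit.fac
    (isColimitCofanMkObjOfIsColimit (tensorLeft A) f _ (coproductIsCoproduct f)) u j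

lemma whiskerLeftSigmaDesc_comp {A W W' : C} {f : J → C} (u : ∀ j, A ⊗ f j ⟶ W) (h : W ⟶ W') :
    whiskerLeftSigmaDesc u ≫ h = whiskerLeftSigmaDesc fun j => u j ≫ h :=
  whiskerLeft_sigma_hom_ext fun j => by
    rw [reassoc_of% whiskerLeft_ι_comp_desc, whiskerLeft_ι_comp_desc]

/-- The sum of the family `u` along `d`: the composite
`A ≅ A ⊗ 𝟙_ C ⟶ A ⊗ ∐ 𝟙_ C ≅ ∐ A ⟶ W` of `A ◁ d` with the cotuple of `u`. -/
noncomputable def sumAlong (d : 𝟙_ C ⟶ ∐ fun _ : J => 𝟙_ C) {A W : C} (u : J → (A ⟶ W)) :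
    A ⟶ W :=
  (ρ_ A).inv ≫ A ◁ d ≫ whiskerLeftSigmaDesc fun j => (ρ_ A).hom ≫ u j

lemma sumAlong_comp (d : 𝟙_ C ⟶ ∐ fun _ : J => 𝟙_ C) {A W W' : C} (u : J → (A ⟶ W))
    (h : W ⟶ W') : sumAlong d u ≫ h = sumAlong d fun j => u j ≫ h := by
  simp only [sumAlong, Category.assoc, whiskerLeftSigmaDesc_comp]

lemma comp_sumAlong (d : 𝟙_ C ⟶ ∐ fun _ : J => 𝟙_ C) {A A' W : C} (h : A' ⟶ A)
    (u : J → (A ⟶ W)) : h ≫ sumAlong d u = sumAlong d fun j => h ≫ u j := by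
  have whiskerRight_comp_desc : h ▷ _ ≫ whiskerLeftSigmaDesc (fun j => (ρ_ A).hom ≫ u j) =
      whiskerLeftSigmaDesc fun j => (ρ_ A').hom ≫ h ≫ u j :=
    whiskerLeft_sigma_hom_ext fun j => by
      rw [whisker_exchange_assoc, whiskerLeft_ι_comp_desc, whiskerLeft_ι_comp_desc,
        rightUnitor_naturality_assoc]
  rw [sumAlong, sumAlong, ← whiskerRight_comp_desc, whisker_exchange_assoc,
    rightUnitor_inv_naturality_assoc]

variable [HasZeroMorphisms C]

/-- The coproduct `∐ f` as a bicone, with the projections that zero morphisms provide. -/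
noncomputable def sigmaBicone [DecidableEq J] (f : J → C) : Bicone f where
  pt := ∐ f
  π := Sigma.π f
  ι := Sigma.ι f
  ι_π j k := by convert Sigma.ι_π f j k

/-- `d` is a diagonal of the unit: all its components, with respect to the projections that
zero morphisms provide on a coproduct, are identities. -/
def IsUnitDiagonal [DecidableEq J] (d : 𝟙_ C ⟶ ∐ fun _ : J => 𝟙_ C) : Prop :=
  ∀ k, d ≫ Sigma.π (fun _ : J => 𝟙_ C) k = 𝟙 (𝟙_ C)

variable [∀ A : C, (tensorLeft A).PreservesZeroMorphisms]

lemma whiskerLeftSigmaDesc_eq_whiskerLeft_π_comp [DecidableEq J] {A W : C} {f : J → C}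
    {u : ∀ j, A ⊗ f j ⟶ W} {k : J} (hu : ∀ j ≠ k, u j = 0) :
    whiskerLeftSigmaDesc u = A ◁ Sigma.π f k ≫ u k := by
  refine whiskerLeft_sigma_hom_ext fun j => ?_
  rw [whiskerLeft_ι_comp_desc, ← whiskerLeft_comp_assoc]
  by_cases hjk : j = k
  · subst hjk
    simp
  · have whiskerLeft_zero : A ◁ (0 : f j ⟶ f k) = 0 := (tensorLeft A).map_zero _ _
    rw [hu j hjk, Sigma.ι_π_of_ne f hjk, whiskerLeft_zero, zero_comp]

lemma IsUnitDiagonal.sumAlong_eq [DecidableEq J] {d : 𝟙_ C ⟶ ∐ fun _ : J => 𝟙_ C}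
    (hd : IsUnitDiagonal d) {A W : C} {u : J → (A ⟶ W)} {k : J} (hu : ∀ j ≠ k, u j = 0) :
    sumAlong d u = u k := by
  have hu' : ∀ j ≠ k, (ρ_ A).hom ≫ u j = 0 := fun j hj => by rw [hu j hj, comp_zero]
  rw [sumAlong, whiskerLeftSigmaDesc_eq_whiskerLeft_π_comp hu', ← whiskerLeft_comp_assoc, hd k]
  simp

lemma IsUnitDiagonal.sumAlong_π_comp_ι [DecidableEq J] {d : 𝟙_ C ⟶ ∐ fun _ : J => 𝟙_ C}
    (hd : IsUnitDiagonal d) (f : J → C) :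
    sumAlong d (fun j => Sigma.π f j ≫ Sigma.ι f j) = 𝟙 (∐ f) := by
  refine Sigma.hom_ext _ _ fun k => ?_
  rw [comp_sumAlong, hd.sumAlong_eq (k := k), Sigma.ι_π_eq_id_assoc, Category.comp_id]
  intro j hj
  rw [Sigma.ι_π_of_ne_assoc f hj.symm, zero_comp]

/-- A diagonal of the unit makes `∐ f` a product, tuples being `∑ wⱼ ≫ ιⱼ`. -/
noncomputable def IsUnitDiagonal.isLimitSigma [DecidableEq J] {d : 𝟙_ C ⟶ ∐ fun _ : J => 𝟙_ C}
    (hd : IsUnitDiagonal d) (f : J → C) : IsLimit (Fan.mk (∐ f) (Sigma.π f)) :=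
  Fan.IsLimit.mk _ (fun t => sumAlong d fun j => t.proj j ≫ Sigma.ι f j)
    (fun t k => by
      change sumAlong d _ ≫ Sigma.π f k = t.proj k
      rw [sumAlong_comp, hd.sumAlong_eq (k := k), Category.assoc, Sigma.ι_π_eq_id,
        Category.comp_id]
      intro j hj
      rw [Category.assoc, Sigma.ι_π_of_ne f hj, comp_zero])
    fun t (m : t.pt ⟶ ∐ f) (hm : ∀ j, m ≫ Sigma.π f j = t.proj j) =>
      calc
        m = m ≫ sumAlong d fun j => Sigma.π f j ≫ Sigma.ι f j := by
          rw [hd.sumAlong_π_comp_ι f, Category.comp_id]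
        _ = sumAlong d fun j => t.proj j ≫ Sigma.ι f j := by
          simp only [comp_sumAlong, reassoc_of% hm]

theorem IsUnitDiagonal.hasBiproductsOfShape [DecidableEq J] {d : 𝟙_ C ⟶ ∐ fun _ : J => 𝟙_ C}
    (hd : IsUnitDiagonal d) : HasBiproductsOfShape J C where
  has_biproduct f :=
    HasBiproduct.mk ⟨sigmaBicone f, ⟨hd.isLimitSigma f, coproductIsCoproduct f⟩⟩

theorem IsRightDual.exists_isUnitDiagonal [DecidableEq J] {D : C}
    {η : 𝟙_ C ⟶ D ⊗ ∐ fun _ : J => 𝟙_ C} (h : IsRightDual (∐ fun _ : J => 𝟙_ C) D η) :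
    ∃ d : 𝟙_ C ⟶ ∐ fun _ : J => 𝟙_ C, IsUnitDiagonal d := by
  choose q hq using fun j => h.exists_eq_comp_whiskerRight (Sigma.ι (fun _ : J => 𝟙_ C) j)
  let s : (D ⊗ ∐ fun _ : J => 𝟙_ C) ⟶ ∐ fun _ : J => 𝟙_ C :=
    whiskerLeftSigmaDesc fun j => (ρ_ D).hom ≫ q j ≫ Sigma.ι (fun _ : J => 𝟙_ C) j
  have s_π (k : J) : s ≫ Sigma.π (fun _ : J => 𝟙_ C) k =
      D ◁ Sigma.π (fun _ : J => 𝟙_ C) k ≫ (ρ_ D).hom ≫ q k := by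
    rw [whiskerLeftSigmaDesc_comp, whiskerLeftSigmaDesc_eq_whiskerLeft_π_comp (k := k)]
    · simp
    · intro j hj
      simp [Sigma.ι_π_of_ne (fun _ : J => 𝟙_ C) hj]
  refine ⟨η ≫ s, fun k => ?_⟩
  calc
    (η ≫ s) ≫ Sigma.π (fun _ : J => 𝟙_ C) k
      = η ≫ q k ▷ _ ≫ (λ_ _).hom ≫ Sigma.π (fun _ : J => 𝟙_ C) k := by
        rw [Category.assoc, s_π, whiskerRight_comp_leftUnitor_comp]
    _ = Sigma.ι (fun _ : J => 𝟙_ C) k ≫ Sigma.π (fun _ : J => 𝟙_ C) k := by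
        rw [← hq k]; simp only [Category.assoc]
    _ = 𝟙 (𝟙_ C) := Sigma.ι_π_eq_id _ k

end Diagonal

section FiniteDiagonal

variable [HasFiniteCoproducts C] [∀ A : C, PreservesFiniteCoproducts (tensorLeft A)]
  [HasZeroMorphisms C] [∀ A : C, (tensorLeft A).PreservesZeroMorphisms]

lemma IsUnitDiagonal.exists_comp_π_eq_ite {δ : 𝟙_ C ⟶ ∐ fun _ : WalkingPair => 𝟙_ C}
    (hδ : IsUnitDiagonal δ) {J : Type w} [Finite J] [DecidableEq J] (s : Finset J) :
    ∃ d : 𝟙_ C ⟶ ∐ fun _ : J => 𝟙_ C,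
      ∀ k, d ≫ Sigma.π (fun _ : J => 𝟙_ C) k = if k ∈ s then 𝟙 (𝟙_ C) else 0 := by
  induction s using Finset.induction_on with
  | empty => exact ⟨0, fun k => by simp⟩
  | insert a s ha ih =>
    obtain ⟨d, hd⟩ := ih
    let summand : WalkingPair → (𝟙_ C ⟶ ∐ fun _ : J => 𝟙_ C)
      | .left => Sigma.ι (fun _ : J => 𝟙_ C) a
      | .right => d
    refine ⟨sumAlong δ summand, fun k => ?_⟩
    rw [sumAlong_comp]
    by_cases hka : k = a
    · subst hka
      rw [hδ.sumAlong_eq (k := .left)]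
      · simp [summand]
      · rintro (_ | _) h
        · exact absurd rfl h
        · simp [summand, hd, ha]
    · rw [hδ.sumAlong_eq (k := .right)]
      · simp [summand, hd, hka]
      · rintro (_ | _) h
        · exact Sigma.ι_π_of_ne _ (Ne.symm hka)
        · exact absurd rfl h

theorem IsUnitDiagonal.hasFiniteBiproducts {δ : 𝟙_ C ⟶ ∐ fun _ : WalkingPair => 𝟙_ C}
    (hδ : IsUnitDiagonal δ) : HasFiniteBiproducts C where
  out n := by
    obtain ⟨d, hd⟩ := hδ.exists_comp_π_eq_ite (Finset.univ : Finset (Fin n))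
    exact IsUnitDiagonal.hasBiproductsOfShape (d := d) fun k => by simpa using hd k

end FiniteDiagonal

end Monoidal

/-- **Theorem 1.** Let `C` be a monoidal category possessing finite coproducts, preserved
by each functor `A ⊗ (−)`.  Then `C` has a zero object and finite biproducts — i.e. there
is an object `Z` that is both initial and terminal, and every finite family of objects
admits a coproduct cocone whose induced projections (`inj k ≫ p k = 𝟙`, and
`inj i ≫ p k` the zero morphism through `Z` for `i ≠ k`) form a product cone — if and
only if the initial object `⊥_ C` and the coproduct `𝟙_ C ⨿ 𝟙_ C` of the unit with
itself admit right duals. -/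
theorem hasBiproducts_iff_rightDuals {C : Type u} [Category.{v} C] [MonoidalCategory C]
    [HasFiniteCoproducts C]
    (hp : ∀ A : C, PreservesFiniteCoproducts (tensorLeft A)) :
    (∃ (Z : C) (hZi : IsInitial Z) (hZt : IsTerminal Z),
      ∀ (ι : Type) (_ : Finite ι) (f : ι → C),
        ∃ (A : C) (inj : ∀ i, f i ⟶ A) (p : ∀ k, A ⟶ f k),
          Nonempty (IsColimit (Cofan.mk A inj)) ∧
          (∀ k, inj k ≫ p k = 𝟙 (f k)) ∧
          (∀ i k, i ≠ k → inj i ≫ p k = hZt.from (f i) ≫ hZi.to (f k)) ∧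
          Nonempty (IsLimit (Fan.mk A p))) ↔
    ((∃ (Y : C) (η : 𝟙_ C ⟶ Y ⊗ (⊥_ C)), IsRightDual (⊥_ C) Y η) ∧
     (∃ (D : C) (η : 𝟙_ C ⟶ D ⊗ (𝟙_ C ⨿ 𝟙_ C)), IsRightDual (𝟙_ C ⨿ 𝟙_ C) D η)) := by
  constructor
  · rintro ⟨Z, hZi, hZt, H⟩
    have hZ := isZero_of_isInitial_of_isTerminal hZi hZt
    have : HasZeroObject C := ⟨Z, hZ⟩
    let : HasZeroMorphisms C := hZ.hasZeroMorphisms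
    have : HasFiniteBiproducts C := (hasFiniteBiproducts_iff_exists_isColimit_isLimit hZi hZt).mpr H
    exact ⟨(rightDualizable_sigma_unit PEmpty).of_iso (initialIsoSigma _).symm,
      (rightDualizable_sigma_unit WalkingPair).of_iso (coprodIsoSigma fun _ => 𝟙_ C).symm⟩
  · rintro ⟨initial_dual, coprod_dual⟩
    obtain ⟨e⟩ := nonempty_unit_hom_of_rightDualizable initialIsInitial initial_dual
    have bot_isTerminal : IsTerminal (⊥_ C) := isTerminalOfUnitHom initialIsInitial e
    have hZ := isZero_of_isInitial_of_isTerminal initialIsInitial bot_isTerminal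
    have : HasZeroObject C := ⟨⊥_ C, hZ⟩
    let : HasZeroMorphisms C := hZ.hasZeroMorphisms
    obtain ⟨_, _, sigma_dual⟩ :=
      RightDualizable.of_iso coprod_dual (coprodIsoSigma fun _ => 𝟙_ C)
    obtain ⟨_, hδ⟩ := sigma_dual.exists_isUnitDiagonal
    exact ⟨⊥_ C, initialIsInitial, bot_isTerminal,
      (hasFiniteBiproducts_iff_exists_isColimit_isLimit _ _).mp hδ.hasFiniteBiproducts⟩
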